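/- arXiv:2401.07266 — 2 statements merged into one kernel-verified Lean document; each statement's English description precedes it below -/
import Mathlib

section
/- The number of labelled trees on [n] containing two fixed disjoint edges ij and kl is 4n^{n−4}, and the number containing two fixed edges ij and ik sharing a vertex is 3n^{n−4} (for n ≥ 4 and i,j,k,l distinct). -/
open Finset SimpleGraph

/-!
Moon's formula: if a forest `F` on `n` vertices has `c` components, of sizes `w₁, …, w_c`, then
`n ^ (c - 2) * w₁ * ⋯ * w_c` trees contain it. Count in two ways the pairs of a tree `T ⊇ F` and an
ordered pair `(u, v)` of vertices in different components of `F` that is an edge of `T`. Each `T`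
occurs `2 * (c - 1)` times. On the other hand, joining `u` to `v` leaves `c - 1` components and
multiplies the product of the sizes by `1 / w(u) + 1 / w(v)`; these factors add up to
`2 * (c - 1) * n`, so the formula follows by induction on `c`. Two disjoint edges leave components
of sizes `2, 2, 1, …, 1` and two edges with a common vertex leave `3, 1, …, 1`, with `c = n - 2` in
both cases.
-/

section SupEdge

variable {V : Type*} {G : SimpleGraph V} {u v a b : V}

lemma reachable_sup_edge_iff :
    (G ⊔ edge u v).Reachable a b ↔
      G.Reachable a b ∨ G.Reachable a u ∧ G.Reachable v b ∨ G.Reachable a v ∧ G.Reachable u b := by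
  have reachable_uv : (G ⊔ edge u v).Reachable u v := by
    by_cases huv : u = v
    · rw [huv]
    · exact Adj.reachable (by simp [edge_adj, huv])
  have mono {x y : V} (h : G.Reachable x y) : (G ⊔ edge u v).Reachable x y := h.mono le_sup_left
  constructor
  · rintro ⟨p⟩
    induction p with
    | nil => exact .inl .rfl
    | cons hadj _ ih =>
      rcases hadj with hadj | hadj
      · exact ih.imp hadj.reachable.trans
          (.imp (.imp_left hadj.reachable.trans) (.imp_left hadj.reachable.trans))
      · obtain ⟨⟨rfl, rfl⟩ | ⟨rfl, rfl⟩, -⟩ := (edge_adj ..).1 hadj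
        · have : G.Reachable _ _ := .refl a
          tauto
        · tauto
  · rintro (h | ⟨hau, hvb⟩ | ⟨hav, hub⟩)
    · exact mono h
    · exact (mono hau).trans (reachable_uv.trans (mono hvb))
    · exact (mono hav).trans (reachable_uv.symm.trans (mono hub))

lemma supp_sup_edge :
    ((G ⊔ edge u v).connectedComponentMk u).supp =
      (G.connectedComponentMk u).supp ∪ (G.connectedComponentMk v).supp := by
  ext a
  simp only [Set.mem_union, ConnectedComponent.mem_supp_iff, ConnectedComponent.eq,
    reachable_sup_edge_iff]
  have : G.Reachable u u := .rfl
  tauto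

lemma supp_sup_edge_of_not_reachable (hu : ¬ G.Reachable a u) (hv : ¬ G.Reachable a v) :
    ((G ⊔ edge u v).connectedComponentMk a).supp = (G.connectedComponentMk a).supp := by
  ext b
  simp only [ConnectedComponent.mem_supp_iff, ConnectedComponent.eq, reachable_sup_edge_iff,
    G.reachable_comm (u := b)]
  tauto

open ConnectedComponent in
@[to_additive]
lemma finprod_supp_sup_edge [Finite V] {M : Type*} [CommMonoid M] (huv : ¬ G.Reachable u v)
    (f : Set V → M) :
    (∏ᶠ c : (G ⊔ edge u v).ConnectedComponent, f c.supp) *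
        (f (G.connectedComponentMk u).supp * f (G.connectedComponentMk v).supp) =
      (∏ᶠ c : G.ConnectedComponent, f c.supp) *
        f ((G.connectedComponentMk u).supp ∪ (G.connectedComponentMk v).supp) := by
  classical
  have := Fintype.ofFinite G.ConnectedComponent
  have := Fintype.ofFinite (G ⊔ edge u v).ConnectedComponent
  set A := G.connectedComponentMk u
  set B := G.connectedComponentMk v
  set AB := (G ⊔ edge u v).connectedComponentMk u
  have hBA : B ∈ univ.erase A := by simpa [A, B, G.reachable_comm] using huv
  have prod_others : ∏ c ∈ univ.erase AB, f c.supp = ∏ c ∈ (univ.erase A).erase B, f c.supp := by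
    refine (prod_bij (fun c _ ↦ c.map (.ofLE le_sup_left)) ?_ ?_ ?_ ?_).symm
    · refine ConnectedComponent.ind fun a ha ↦ ?_
      simp only [A, B, AB, mem_erase, mem_univ, and_true, ne_eq, map_mk, Hom.coe_ofLE, id_eq,
        ConnectedComponent.eq, reachable_sup_edge_iff] at ha ⊢
      tauto
    · refine ConnectedComponent.ind fun a ha ↦ ConnectedComponent.ind fun b hb ↦ ?_
      simp only [A, B, mem_erase, mem_univ, and_true, ne_eq, map_mk, Hom.coe_ofLE, id_eq,
        ConnectedComponent.eq, reachable_sup_edge_iff] at ha hb ⊢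
      tauto
    · refine ConnectedComponent.ind fun a ha ↦ ⟨G.connectedComponentMk a, ?_, rfl⟩
      simp only [A, B, AB, mem_erase, mem_univ, and_true, ne_eq,
        ConnectedComponent.eq, reachable_sup_edge_iff] at ha ⊢
      tauto
    · refine ConnectedComponent.ind fun a ha ↦ ?_
      simp only [A, B, mem_erase, mem_univ, and_true, ne_eq, ConnectedComponent.eq] at ha
      exact congrArg f (supp_sup_edge_of_not_reachable ha.2 ha.1).symm
  rw [finprod_eq_prod_of_fintype, finprod_eq_prod_of_fintype, ← supp_sup_edge,
    ← prod_erase_mul univ _ (mem_univ AB), ← prod_erase_mul univ _ (mem_univ A),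
    ← prod_erase_mul _ _ hBA, prod_others]
  ac_rfl

lemma card_connectedComponent_sup_edge [Finite V] (huv : ¬ G.Reachable u v) :
    Nat.card (G ⊔ edge u v).ConnectedComponent + 1 = Nat.card G.ConnectedComponent := by
  classical
  have := Fintype.ofFinite G.ConnectedComponent
  have := Fintype.ofFinite (G ⊔ edge u v).ConnectedComponent
  have h := finsum_supp_sup_edge huv fun _ ↦ 1
  simp only [finsum_eq_sum_of_fintype, sum_const, card_univ, smul_eq_mul, mul_one] at h
  rw [Nat.card_eq_fintype_card, Nat.card_eq_fintype_card]
  omega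

end SupEdge

section ComponentSize

variable {V : Type*} {G : SimpleGraph V} {u v : V}

/-- The number of vertices of the component of `v` in `G`. -/
noncomputable def componentSize (G : SimpleGraph V) (v : V) : ℕ :=
  (G.connectedComponentMk v).supp.ncard

/-- The product of the numbers of vertices of the components of `G`: the number of ways to choose
one vertex in each component. -/
noncomputable def componentSizeProd (G : SimpleGraph V) : ℕ :=
  ∏ᶠ c : G.ConnectedComponent, c.supp.ncard

lemma componentSize_pos [Finite V] : 0 < componentSize G v :=
  (Set.ncard_pos (Set.toFinite _)).2 ⟨v, rfl⟩

lemma componentSize_sup_edge [Finite V] (huv : ¬ G.Reachable u v) :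
    componentSize (G ⊔ edge u v) u = componentSize G u + componentSize G v := by
  have hdisj : Disjoint (G.connectedComponentMk u).supp (G.connectedComponentMk v).supp :=
    pairwise_disjoint_supp_connectedComponent G (by simpa)
  rw [componentSize, supp_sup_edge, Set.ncard_union_eq hdisj, componentSize, componentSize]

lemma componentSize_sup_edge_of_not_reachable {a : V} (hu : ¬ G.Reachable a u)
    (hv : ¬ G.Reachable a v) : componentSize (G ⊔ edge u v) a = componentSize G a := by
  rw [componentSize, supp_sup_edge_of_not_reachable hu hv, componentSize]

lemma componentSizeProd_sup_edge [Finite V] (huv : ¬ G.Reachable u v) :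
    componentSizeProd (G ⊔ edge u v) * (componentSize G u * componentSize G v) =
      componentSizeProd G * (componentSize G u + componentSize G v) := by
  rw [← componentSize_sup_edge huv, componentSize, componentSize, componentSize, supp_sup_edge]
  exact finprod_supp_sup_edge huv Set.ncard

lemma componentSize_bot : componentSize (⊥ : SimpleGraph V) v = 1 := by
  simp [componentSize, ConnectedComponent.supp]

lemma componentSizeProd_bot : componentSizeProd (⊥ : SimpleGraph V) = 1 :=
  finprod_eq_one_of_forall_eq_one <| ConnectedComponent.ind fun _ ↦ componentSize_bot

lemma card_connectedComponent_bot :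
    Nat.card (⊥ : SimpleGraph V).ConnectedComponent = Nat.card V := by
  refine (Nat.card_eq_of_bijective (⊥ : SimpleGraph V).connectedComponentMk ⟨?_, ?_⟩).symm
  · intro u v h
    simpa using h
  · exact Quot.mk_surjective

lemma componentSizeProd_of_connected (hG : G.Connected) :
    componentSizeProd G = Nat.card V := by
  have := hG.preconnected.subsingleton_connectedComponent
  obtain ⟨v⟩ := hG.nonempty
  have hsupp : (G.connectedComponentMk v).supp = Set.univ :=
    Set.eq_univ_of_forall fun _ ↦ Subsingleton.elim _ _
  rw [componentSizeProd, finprod_eq_single _ (G.connectedComponentMk v)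
    fun c hc ↦ (hc (Subsingleton.elim _ _)).elim, hsupp, Set.ncard_univ]

variable [Fintype V]

lemma sum_inv_componentSize (G : SimpleGraph V) :
    ∑ v, (componentSize G v : ℚ)⁻¹ = Nat.card G.ConnectedComponent := by
  classical
  have := Fintype.ofFinite G.ConnectedComponent
  have sum_component (c : G.ConnectedComponent) :
      ∑ v with G.connectedComponentMk v = c, (componentSize G v : ℚ)⁻¹ = 1 := by
    have card_eq : #{v | G.connectedComponentMk v = c} = c.supp.ncard := by
      rw [← Set.ncard_coe_finset]
      simp [ConnectedComponent.supp]
    have hc : (c.supp.ncard : ℚ) ≠ 0 := by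
      exact_mod_cast ((Set.ncard_pos (Set.toFinite _)).2 c.nonempty_supp).ne'
    rw [sum_congr rfl fun v hv ↦ by rw [componentSize, (mem_filter.1 hv).2], sum_const, card_eq,
      nsmul_eq_mul, mul_inv_cancel₀ hc]
  rw [← sum_fiberwise univ G.connectedComponentMk]
  simp [sum_component]

open Classical in
lemma card_not_reachable_add_componentSize (G : SimpleGraph V) (u : V) :
    #{v | ¬ G.Reachable u v} + componentSize G u = Fintype.card V := by
  have : componentSize G u = #{v | G.Reachable u v} := by
    rw [← Set.ncard_coe_finset]
    simp [componentSize, ConnectedComponent.supp, G.reachable_comm]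
  rw [this, add_comm, card_filter_add_card_filter_not, card_univ]

open Classical in
lemma sum_not_reachable_inv_componentSize (G : SimpleGraph V) :
    ∑ p : V × V with ¬ G.Reachable p.1 p.2,
        ((componentSize G p.1 : ℚ)⁻¹ + (componentSize G p.2 : ℚ)⁻¹) =
      2 * (Nat.card G.ConnectedComponent - 1) * Fintype.card V := by
  have sum_snd (u : V) : ∑ v with ¬ G.Reachable u v, (componentSize G u : ℚ)⁻¹ =
      Fintype.card V * (componentSize G u : ℚ)⁻¹ - 1 := by
    have : (componentSize G u : ℚ) ≠ 0 := by exact_mod_cast componentSize_pos.ne'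
    rw [sum_const, nsmul_eq_mul, ← card_not_reachable_add_componentSize G u, Nat.cast_add]
    field_simp
    ring
  have sum_inv_fst : ∑ p : V × V with ¬ G.Reachable p.1 p.2, (componentSize G p.1 : ℚ)⁻¹ =
      (Nat.card G.ConnectedComponent - 1) * Fintype.card V := by
    calc _ = ∑ u, ∑ v with ¬ G.Reachable u v, (componentSize G u : ℚ)⁻¹ := by
          simp only [sum_filter, Fintype.sum_prod_type]
      _ = (Nat.card G.ConnectedComponent - 1) * Fintype.card V := by
          simp only [sum_snd, sum_sub_distrib, ← mul_sum, sum_inv_componentSize, sum_const,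
            card_univ, nsmul_eq_mul]
          ring
  have sum_inv_snd : ∑ p : V × V with ¬ G.Reachable p.1 p.2, (componentSize G p.2 : ℚ)⁻¹ =
      ∑ p : V × V with ¬ G.Reachable p.1 p.2, (componentSize G p.1 : ℚ)⁻¹ :=
    sum_equiv (Equiv.prodComm V V) (by simp [G.reachable_comm]) (by simp)
  rw [sum_add_distrib, sum_inv_snd, sum_inv_fst]
  ring

open Classical in
lemma sum_componentSizeProd_sup_edge (G : SimpleGraph V) :
    ∑ p : V × V with ¬ G.Reachable p.1 p.2, (componentSizeProd (G ⊔ edge p.1 p.2) : ℚ) =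
      2 * (Nat.card G.ConnectedComponent - 1) * Fintype.card V * componentSizeProd G := by
  have prod_sup_edge {u v : V} (huv : ¬ G.Reachable u v) :
      (componentSizeProd (G ⊔ edge u v) : ℚ) =
        ((componentSize G u : ℚ)⁻¹ + (componentSize G v : ℚ)⁻¹) * componentSizeProd G := by
    have hu : (componentSize G u : ℚ) ≠ 0 := by exact_mod_cast componentSize_pos.ne'
    have hv : (componentSize G v : ℚ) ≠ 0 := by exact_mod_cast componentSize_pos.ne'
    have h := componentSizeProd_sup_edge huv
    qify at h
    field_simp
    linear_combination h
  rw [sum_congr rfl fun p hp ↦ prod_sup_edge (mem_filter.1 hp).2, ← sum_mul,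
    sum_not_reachable_inv_componentSize]

end ComponentSize

section Trees

variable {V : Type*} {F T : SimpleGraph V}

lemma reachable_iff_adj_of_le_isAcyclic {u v : V} (hT : T.IsAcyclic) (hle : F ≤ T)
    (huv : T.Adj u v) : F.Reachable u v ↔ F.Adj u v :=
  ((isAcyclic_iff_forall_adj_isBridge.1 hT huv).anti hle).reachable_iff_adj

lemma ncard_edgeSet_add_card_connectedComponent [Finite V] (hF : F.IsAcyclic) :
    F.edgeSet.ncard + Nat.card F.ConnectedComponent = Nat.card V := by
  induction h : F.edgeSet.ncard generalizing F with
  | zero =>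
    obtain rfl : F = ⊥ := edgeSet_eq_empty.1 ((Set.ncard_eq_zero (Set.toFinite _)).1 h)
    rw [card_connectedComponent_bot, zero_add]
  | succ m ih =>
    obtain ⟨⟨u, v⟩, huv⟩ : F.edgeSet.Nonempty := Set.nonempty_of_ncard_ne_zero (by omega)
    replace huv : F.Adj u v := huv
    obtain ⟨F', hbridge, rfl⟩ : ∃ F', ¬ F'.Reachable u v ∧ F' ⊔ edge u v = F :=
      ⟨_, isBridge_iff.1 (isAcyclic_iff_forall_adj_isBridge.1 hF huv),
        sdiff_sup_cancel ((edge_le_iff F).2 (.inr huv))⟩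
    have hnotMem : s(u, v) ∉ F'.edgeSet := mt Adj.reachable hbridge
    rw [edgeSet_sup, edgeSet_edge_of_ne huv.ne, Set.union_singleton,
      Set.ncard_insert_of_notMem hnotMem] at h
    have hcomponents := card_connectedComponent_sup_edge hbridge
    have hF' := ih (hF.anti le_sup_left) (Nat.succ_injective h)
    omega

lemma ncard_edgeSet_sdiff_add_one [Finite V] (hT : T.IsTree) (hle : F ≤ T) :
    (T \ F).edgeSet.ncard + 1 = Nat.card F.ConnectedComponent := by
  have hF := ncard_edgeSet_add_card_connectedComponent (hT.isAcyclic.anti hle)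
  have hT : T.edgeSet.ncard + 1 = Nat.card V := (isTree_iff_connected_and_card.1 hT).2
  have hsub := Set.ncard_sdiff_add_ncard_of_subset (edgeSet_subset_edgeSet.2 hle)
  rw [edgeSet_sdiff]
  omega

variable [Fintype V]

open Classical in
lemma card_adj_not_reachable_add_two (hT : T.IsTree) (hle : F ≤ T) :
    #{p : V × V | ¬ F.Reachable p.1 p.2 ∧ T.Adj p.1 p.2} + 2 =
      2 * Nat.card F.ConnectedComponent := by
  have pairs_eq : #{p : V × V | ¬ F.Reachable p.1 p.2 ∧ T.Adj p.1 p.2} =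
      #{p : V × V | (T \ F).Adj p.1 p.2} := by
    refine congrArg card (filter_congr fun p _ ↦ ?_)
    rw [sdiff_adj, and_comm, and_congr_right_iff]
    exact fun h ↦ (reachable_iff_adj_of_le_isAcyclic hT.isAcyclic hle h).not
  have two_mul_edges (G : SimpleGraph V) [DecidableRel G.Adj] :
      2 * G.edgeSet.ncard = #{p : V × V | G.Adj p.1 p.2} := by
    rw [← coe_edgeFinset, Set.ncard_coe_finset]
    exact two_mul_card_edgeFinset G
  rw [pairs_eq, ← two_mul_edges, ← ncard_edgeSet_sdiff_add_one hT hle, mul_add]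

open Classical in
/-- The spanning trees of the complete graph on `V` that contain every edge of `F`. -/
noncomputable def treesContaining (F : SimpleGraph V) : Finset (SimpleGraph V) :=
  {T | T.IsTree ∧ F ≤ T}

open Classical in
lemma treesContaining_sup_edge {u v : V} (huv : u ≠ v) :
    treesContaining (F ⊔ edge u v) = {T ∈ treesContaining F | T.Adj u v} := by
  ext T
  simp [treesContaining, -edge_le, edge_le_iff, huv, and_assoc]

lemma treesContaining_of_isTree (hF : F.IsTree) : treesContaining F = {F} := by
  ext T
  simp only [treesContaining, mem_filter, mem_univ, true_and, mem_singleton]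
  refine ⟨fun ⟨hT, hle⟩ ↦ ?_, fun h ↦ ⟨h ▸ hF, h.ge⟩⟩
  exact ((isTree_iff_minimal_connected.1 hT).le_of_le hF.connected hle).antisymm hle

open Classical in
lemma sum_card_treesContaining_sup_edge (F : SimpleGraph V) :
    ∑ p : V × V with ¬ F.Reachable p.1 p.2, (#(treesContaining (F ⊔ edge p.1 p.2)) : ℚ) =
      2 * (Nat.card F.ConnectedComponent - 1) * #(treesContaining F) := by
  have card_pairs {T : SimpleGraph V} (hT : T ∈ treesContaining F) :
      (#{p : V × V | ¬ F.Reachable p.1 p.2 ∧ T.Adj p.1 p.2} : ℚ) =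
        2 * (Nat.card F.ConnectedComponent - 1) := by
    have ⟨hTree, hle⟩ : T.IsTree ∧ F ≤ T := by simpa [treesContaining] using hT
    have := card_adj_not_reachable_add_two hTree hle
    qify at this
    linear_combination this
  calc
    _ = ∑ p : V × V with ¬ F.Reachable p.1 p.2, (#{T ∈ treesContaining F | T.Adj p.1 p.2} : ℚ) := by
      refine sum_congr rfl fun p hp ↦ ?_
      have hne : p.1 ≠ p.2 := fun h ↦ (mem_filter.1 hp).2 (h ▸ .rfl)
      rw [treesContaining_sup_edge hne]
    _ = ∑ T ∈ treesContaining F, (#{p : V × V | ¬ F.Reachable p.1 p.2 ∧ T.Adj p.1 p.2} : ℚ) := by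
      simp only [← filter_filter]
      exact_mod_cast sum_card_bipartiteAbove_eq_sum_card_bipartiteBelow _
    _ = 2 * (Nat.card F.ConnectedComponent - 1) * #(treesContaining F) := by
      rw [sum_congr rfl fun T ↦ card_pairs, sum_const, nsmul_eq_mul, mul_comm]

/-- Moon's formula, multiplied by `n ^ 2` because the exponent in `n ^ (c - 2)` is negative when
`c = 1`. -/
theorem card_sq_mul_card_treesContaining [Nonempty V] (hF : F.IsAcyclic) :
    Fintype.card V ^ 2 * #(treesContaining F) =
      Fintype.card V ^ Nat.card F.ConnectedComponent * componentSizeProd F := by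
  classical
  induction hc : Nat.card F.ConnectedComponent generalizing F with
  | zero => exact absurd hc Nat.card_pos.ne'
  | succ k ih =>
    obtain rfl | hk := k.eq_zero_or_pos
    · have hconn : F.Connected := by
        have := (Nat.card_eq_one_iff_unique.1 hc).1
        exact ⟨fun u v ↦ ConnectedComponent.exact (Subsingleton.elim _ _)⟩
      rw [treesContaining_of_isTree ⟨hconn, hF⟩, componentSizeProd_of_connected hconn,
        Nat.card_eq_fintype_card, card_singleton]
      ring
    · have card_sup_edge {u v : V} (huv : ¬ F.Reachable u v) :
          (Fintype.card V ^ 2 * #(treesContaining (F ⊔ edge u v)) : ℚ) =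
            Fintype.card V ^ k * componentSizeProd (F ⊔ edge u v) := by
        have hcomponents := card_connectedComponent_sup_edge huv
        exact_mod_cast ih (hF.sup_edge_of_not_reachable huv) (by omega)
      have sum_eq : ∑ p : V × V with ¬ F.Reachable p.1 p.2,
            (Fintype.card V ^ 2 * #(treesContaining (F ⊔ edge p.1 p.2)) : ℚ) =
          ∑ p : V × V with ¬ F.Reachable p.1 p.2,
            (Fintype.card V ^ k * componentSizeProd (F ⊔ edge p.1 p.2) : ℚ) :=
        sum_congr rfl fun p hp ↦ card_sup_edge (mem_filter.1 hp).2
      rw [← mul_sum, ← mul_sum, sum_card_treesContaining_sup_edge,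
        sum_componentSizeProd_sup_edge, hc] at sum_eq
      push_cast at sum_eq
      have hk' : (2 * k : ℚ) ≠ 0 := by positivity
      qify
      refine mul_left_cancel₀ hk' ?_
      linear_combination sum_eq

end Trees

section TwoEdges

variable {V : Type*} {i j k l a b : V}

lemma reachable_edge_iff :
    (edge i j).Reachable a b ↔ a = b ∨ a = i ∧ j = b ∨ a = j ∧ i = b := by
  simpa using reachable_sup_edge_iff (G := ⊥) (u := i) (v := j) (a := a) (b := b)

lemma isAcyclic_edge : (edge i j).IsAcyclic := by
  by_cases hij : i = j
  · simp [hij]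
  · simpa using isAcyclic_bot.sup_edge_of_not_reachable (u := i) (v := j) (by simpa)

lemma card_connectedComponent_edge [Finite V] (hij : i ≠ j) :
    Nat.card (edge i j).ConnectedComponent + 1 = Nat.card V := by
  simpa [card_connectedComponent_bot] using
    card_connectedComponent_sup_edge (G := ⊥) (u := i) (v := j) (by simpa)

lemma componentSize_edge_left [Finite V] (hij : i ≠ j) : componentSize (edge i j) i = 2 := by
  simpa [componentSize_bot] using componentSize_sup_edge (G := ⊥) (u := i) (v := j) (by simpa)

lemma componentSize_edge_of_ne (hi : a ≠ i) (hj : a ≠ j) : componentSize (edge i j) a = 1 := by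
  simpa [componentSize_bot] using
    componentSize_sup_edge_of_not_reachable (G := ⊥) (u := i) (v := j) (a := a)
      (by simpa) (by simpa)

lemma componentSizeProd_edge [Finite V] (hij : i ≠ j) : componentSizeProd (edge i j) = 2 := by
  simpa [componentSize_bot, componentSizeProd_bot] using
    componentSizeProd_sup_edge (G := ⊥) (u := i) (v := j) (by simpa)

variable [Fintype V]

lemma natCard_isTree_adj_adj (hij : i ≠ j) (hkl : k ≠ l) :
    Nat.card {T : SimpleGraph V // T.IsTree ∧ T.Adj i j ∧ T.Adj k l} =
      #(treesContaining (edge i j ⊔ edge k l)) :=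
  Nat.subtype_card _ fun T ↦ by simp [treesContaining, -edge_le, edge_le_iff, hij, hkl]

lemma card_treesContaining_edge_sup_edge (hij : i ≠ j) (hkl : ¬ (edge i j).Reachable k l) :
    Fintype.card V ^ 2 * #(treesContaining (edge i j ⊔ edge k l)) *
        (componentSize (edge i j) k * componentSize (edge i j) l) =
      Fintype.card V ^ (Fintype.card V - 2) *
        (2 * (componentSize (edge i j) k + componentSize (edge i j) l)) := by
  have : Nonempty V := ⟨i⟩
  have hcomponents : Nat.card (edge i j ⊔ edge k l).ConnectedComponent = Fintype.card V - 2 := by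
    have h₁ := card_connectedComponent_edge hij
    have h₂ := card_connectedComponent_sup_edge hkl
    rw [Nat.card_eq_fintype_card (α := V)] at h₁
    omega
  rw [card_sq_mul_card_treesContaining (isAcyclic_edge.sup_edge_of_not_reachable hkl),
    hcomponents, mul_assoc, componentSizeProd_sup_edge hkl, componentSizeProd_edge hij]

end TwoEdges

theorem stmt_16_general {V : Type*} [Fintype V] (i j k l : V)
    (hij : i ≠ j) (hik : i ≠ k) (hil : i ≠ l) (hjk : j ≠ k) (hjl : j ≠ l)
    (hkl : k ≠ l) :
    Nat.card {T : SimpleGraph V // T.IsTree ∧ T.Adj i j ∧ T.Adj k l} =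
        4 * Fintype.card V ^ (Fintype.card V - 4) ∧
    Nat.card {T : SimpleGraph V // T.IsTree ∧ T.Adj i j ∧ T.Adj i k} =
        3 * Fintype.card V ^ (Fintype.card V - 4) := by
  classical
  have four_le_card : 4 ≤ Fintype.card V := by
    simpa [hij, hik, hil, hjk, hjl, hkl] using card_le_univ {i, j, k, l}
  have pow_eq : Fintype.card V ^ (Fintype.card V - 2) =
      Fintype.card V ^ 2 * Fintype.card V ^ (Fintype.card V - 4) := by
    rw [← pow_add]
    congr 1
    omega
  have card_sq_pos : 0 < Fintype.card V ^ 2 := by positivity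
  have disjoint_count := card_treesContaining_edge_sup_edge hij
    (k := k) (l := l) (by simp [reachable_edge_iff, hkl, hik.symm, hjk.symm])
  have adjacent_count := card_treesContaining_edge_sup_edge hij
    (k := i) (l := k) (by simp [reachable_edge_iff, hij, hik, hjk])
  rw [pow_eq, componentSize_edge_of_ne hik.symm hjk.symm,
    componentSize_edge_of_ne hil.symm hjl.symm] at disjoint_count
  rw [pow_eq, componentSize_edge_left hij,
    componentSize_edge_of_ne hik.symm hjk.symm] at adjacent_count
  rw [natCard_isTree_adj_adj hij hkl, natCard_isTree_adj_adj hij hik]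
  constructor <;> refine Nat.eq_of_mul_eq_mul_left card_sq_pos ?_ <;> linarith

/-- The number of labelled trees on [n] containing two fixed disjoint edges ij
and kl is 4n^{n−4}, and the number containing two fixed edges ij and ik sharing
a vertex is 3n^{n−4} (for n ≥ 4 and i,j,k,l distinct). -/
theorem stmt_16 (n : ℕ) (hn : 4 ≤ n) (i j k l : Fin n)
    (hij : i ≠ j) (hik : i ≠ k) (hil : i ≠ l) (hjk : j ≠ k) (hjl : j ≠ l)
    (hkl : k ≠ l) :
    Nat.card {T : SimpleGraph (Fin n) // T.IsTree ∧ T.Adj i j ∧ T.Adj k l} =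
        4 * n ^ (n - 4) ∧
    Nat.card {T : SimpleGraph (Fin n) // T.IsTree ∧ T.Adj i j ∧ T.Adj i k} =
        3 * n ^ (n - 4) := by
  simpa only [Fintype.card_fin] using stmt_16_general i j k l hij hik hil hjk hjl hkl
end

section
/- Erdős–Gallai edge bound consequence: if an n-vertex graph G has no matching with k+1 edges (no M_{2k+2} subgraph), then e(G) ≤ max(e(K_k + complement(K_{n-k})), e(K_{2k+1})) ; in particular for n ≥ 3k+3, e(G) ≤ k(n−k) + C(k,2). -/
open Finset SimpleGraph

/-!
Joining `G` to a complete graph on `d` vertices turns Tutte's theorem into Berge's deficiency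
formula: if every matching of `G` has at most `k` edges, then there is a set `u` of vertices such
that `G - u` has at least `|u| + n - 2k` (odd) components. Put `s = |u|`, so `s ≤ k`. A graph on
`n - s` vertices with `c` components has at most `C(n - s - c + 1, 2)` edges, and at most
`C(s, 2) + s (n - s)` edges of `G` meet `u`. Hence
`e(G) ≤ C(s, 2) + s (n - s) + C(2 (k - s) + 1, 2)`. This bound is convex in `s`, so it is largest
at `s = 0` or `s = k`.
-/

namespace ErdosGallai

section Matching

variable {V W : Type*} {G : SimpleGraph V}

lemma exists_isMatching_spanningCoe_eq {H : SimpleGraph V} (hle : H ≤ G)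
    (huniq : ∀ ⦃a b c⦄, H.Adj a b → H.Adj a c → b = c) :
    ∃ M : G.Subgraph, M.IsMatching ∧ M.spanningCoe = H := by
  let M : G.Subgraph :=
    { verts := H.support
      Adj := H.Adj
      adj_sub := fun h ↦ hle h
      edge_vert := fun h ↦ ⟨_, h⟩
      symm := H.symm }
  exact ⟨M, fun a ⟨b, hab⟩ ↦ ⟨b, hab, fun c hac ↦ huniq hac hab⟩, rfl⟩

lemma exists_isMatching_ncard_edgeSet_eq {M : G.Subgraph} (hM : M.IsMatching) {m : ℕ}
    (hm : m ≤ M.edgeSet.ncard) :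
    ∃ M' : G.Subgraph, M'.IsMatching ∧ M'.edgeSet.ncard = m := by
  obtain ⟨T, hTM, hT⟩ := Set.exists_subset_card_eq hm
  have hadj : ∀ ⦃a b⦄, (fromEdgeSet T).Adj a b → M.Adj a b := fun a b h ↦ hTM h.1
  obtain ⟨M', hM', hcoe⟩ := exists_isMatching_spanningCoe_eq (fun a b h ↦ (hadj h).adj_sub)
    fun a b c hab hac ↦ hM.eq_of_adj_left (hadj hab) (hadj hac)
  have hdiag : Disjoint T Sym2.diagSet :=
    Set.disjoint_left.2 fun e he ↦ M.spanningCoe.not_isDiag_of_mem_edgeSet (hTM he)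
  refine ⟨M', hM', ?_⟩
  rw [← Subgraph.edgeSet_spanningCoe, hcoe, edgeSet_fromEdgeSet, hdiag.sdiff_eq_left, hT]

lemma ncard_verts_eq_two_mul_ncard_edgeSet [Finite V] {M : G.Subgraph} (hM : M.IsMatching) :
    M.verts.ncard = 2 * M.edgeSet.ncard := by
  classical
  have := Fintype.ofFinite V
  have hdeg (v : M.verts) [Fintype (M.coe.neighborSet v)] : M.coe.degree v = 1 := by
    obtain ⟨w, hvw, huniq⟩ := hM v.2
    exact degree_eq_one_iff_existsUnique_adj.2
      ⟨⟨w, M.edge_vert hvw.symm⟩, hvw, fun w' hvw' ↦ Subtype.ext (huniq w' hvw')⟩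
  have hedges : M.edgeSet.ncard = #M.coe.edgeFinset := by
    rw [← Subgraph.image_coe_edgeSet_coe,
      Set.ncard_image_of_injective _ (Sym2.map.injective Subtype.val_injective),
      ← coe_edgeFinset, Set.ncard_coe_finset]
  rw [hedges, ← M.coe.sum_degrees_eq_twice_card_edges, ← Nat.card_coe_set_eq,
    Nat.card_eq_fintype_card, ← card_univ, card_eq_sum_ones]
  exact sum_congr rfl fun v _ ↦ by rw [hdeg]

lemma exists_isMatching_comap {H : SimpleGraph W} (e : G ↪g H) {M : H.Subgraph}
    (hM : M.IsMatching) :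
    ∃ M' : G.Subgraph, M'.IsMatching ∧ ∀ a b, M'.Adj a b ↔ M.Adj (e a) (e b) := by
  have hadj : ∀ ⦃a b⦄, (M.spanningCoe.comap e).Adj a b → M.Adj (e a) (e b) := fun _ _ h ↦ h
  obtain ⟨M', hM', hcoe⟩ := exists_isMatching_spanningCoe_eq
    (fun a b h ↦ e.map_rel_iff.1 (hadj h).adj_sub)
    fun a b c hab hac ↦ e.injective (hM.eq_of_adj_left (hadj hab) (hadj hac))
  exact ⟨M', hM', fun a b ↦ iff_of_eq (congrArg (·.Adj a b) hcoe)⟩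

end Matching

section OddComponents

variable {V W : Type*} {G : SimpleGraph V} {H : SimpleGraph W}

lemma ncard_oddComponents_congr (φ : G ≃g H) :
    G.oddComponents.ncard = H.oddComponents.ncard := by
  refine Set.ncard_congr' (φ.connectedComponentEquiv.subtypeEquiv fun C ↦ ?_)
  change Odd C.supp.ncard ↔ Odd (φ.connectedComponentEquiv C).supp.ncard
  rw [Set.ncard_congr' (ConnectedComponent.isoEquivSupp φ C)]

/-- Deleting the vertices `u` as a subgraph, the form used by Mathlib's Tutte theorem, agrees with
inducing on the complement of `u`. -/
def deleteVertsTopIso (G : SimpleGraph V) (u : Set V) :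
    ((⊤ : G.Subgraph).deleteVerts u).coe ≃g G.induce uᶜ where
  toEquiv := Equiv.setCongr (by simp [Set.compl_eq_univ_sdiff])
  map_rel_iff' {a b} := by
    have ha := a.2.2
    have hb := b.2.2
    simp [ha, hb]

/-- An induced subgraph of `H` whose vertices lie in the image of an embedding `e : G ↪g H`, seen
as an induced subgraph of `G`. -/
noncomputable def inducePreimageIso (e : G ↪g H) {s : Set W} (hs : s ⊆ Set.range e) :
    G.induce (e ⁻¹' s) ≃g H.induce s where
  toEquiv := Equiv.ofBijective (fun v ↦ ⟨e v, v.2⟩)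
    ⟨fun a b h ↦ Subtype.ext (e.injective (congrArg Subtype.val h)), fun ⟨x, hx⟩ ↦ by
      obtain ⟨v, rfl⟩ := hs hx
      exact ⟨⟨v, hx⟩, rfl⟩⟩
  map_rel_iff' := e.map_rel_iff

lemma exists_isPerfectMatching_of_forall_ncard_oddComponents_le [Finite V]
    (h : ∀ u : Set V, (G.induce uᶜ).oddComponents.ncard ≤ u.ncard) :
    ∃ M : G.Subgraph, M.IsPerfectMatching :=
  tutte.2 fun u hu ↦ (h u).not_gt <| by
    rwa [IsTutteViolator, ncard_oddComponents_congr (deleteVertsTopIso G u)] at hu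

lemma even_ncard_oddComponents_induce_compl_add_ncard [Finite V] (G : SimpleGraph V) (u : Set V) :
    Even ((G.induce uᶜ).oddComponents.ncard + u.ncard) ↔ Even (Nat.card V) := by
  have hparity := odd_ncard_oddComponents (G.induce uᶜ)
  rw [Nat.card_coe_set_eq] at hparity
  have hcard := u.ncard_add_ncard_compl
  rw [← hcard]
  grind

lemma ncard_oddComponents_le_one_of_isUniversal {v : V} (hv : G.IsUniversal v) :
    G.oddComponents.ncard ≤ 1 := by
  have := (Connected.of_isUniversal hv).preconnected.subsingleton_connectedComponent
  exact Set.ncard_le_one_of_subsingleton _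

end OddComponents

section Berge

variable {V : Type*} (G : SimpleGraph V) (W : Type*)

/-- The join of `G` with the complete graph on `W`: every vertex of `W` is adjacent to all other
vertices. It reduces Berge's deficiency formula to Tutte's perfect matching theorem. -/
def joinTop : SimpleGraph (V ⊕ W) := (G ⊕g ⊤) ⊔ completeBipartiteGraph V W

/-- The inclusion of `G` in its join with a complete graph, as an induced subgraph. -/
def joinTopInl : G ↪g joinTop G W where
  toEmbedding := .inl
  map_rel_iff' := by simp [joinTop]

variable {G W}

lemma isUniversal_joinTop_inr (w : W) : (joinTop G W).IsUniversal (.inr w) := by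
  rintro (v | w') h
  · simp [joinTop]
  · simpa [joinTop] using h

lemma isUniversal_induce {s : Set V} {v : V} (hv : v ∈ s) (h : G.IsUniversal v) :
    (G.induce s).IsUniversal ⟨v, hv⟩ :=
  fun _ hne ↦ h (Subtype.coe_ne_coe.2 hne)

lemma exists_isMatching_of_isPerfectMatching_joinTop [Finite W]
    {M : (joinTop G W).Subgraph} (hM : M.IsPerfectMatching) :
    ∃ M' : G.Subgraph, M'.IsMatching ∧ M'.vertsᶜ.ncard ≤ Nat.card W := by
  obtain ⟨M', hM', hadj⟩ := exists_isMatching_comap (joinTopInl G W) hM.1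
  refine ⟨M', hM', ?_⟩
  have hpartner : ∀ v : (M'.vertsᶜ : Set V), ∃ w : W, M.Adj (.inl v) (.inr w) := by
    rintro ⟨v, hv⟩
    obtain ⟨b | w, hvw, -⟩ := hM.1 (hM.2 (.inl v))
    · exact absurd (M'.edge_vert ((hadj v b).2 hvw)) hv
    · exact ⟨w, hvw⟩
  choose partner hpartner using hpartner
  rw [← Nat.card_coe_set_eq]
  refine Nat.card_le_card_of_injective partner fun a b hab ↦
    Subtype.ext (Sum.inl_injective (β := W) ?_)
  exact hM.1.eq_of_adj_right (hpartner a) (hab ▸ hpartner b)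

lemma exists_isMatching_ncard_compl_verts_le_of_even [Finite V] {d : ℕ}
    (hd : Even (Nat.card V + d))
    (h : ∀ u : Set V, (G.induce uᶜ).oddComponents.ncard ≤ u.ncard + d) :
    ∃ M : G.Subgraph, M.IsMatching ∧ M.vertsᶜ.ncard ≤ d := by
  suffices ∃ M : (joinTop G (Fin d)).Subgraph, M.IsPerfectMatching by
    obtain ⟨M, hM⟩ := this
    simpa using exists_isMatching_of_isPerfectMatching_joinTop hM
  refine exists_isPerfectMatching_of_forall_ncard_oddComponents_le fun u ↦ ?_
  by_cases hu : Set.range Sum.inr ⊆ u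
  · have hrange : uᶜ ⊆ Set.range (joinTopInl G (Fin d)) := by
      rintro (v | w) hx
      · exact ⟨v, rfl⟩
      · exact absurd (hu ⟨w, rfl⟩) hx
    have hcompl := Set.ncard_preimage_of_injective_subset_range Sum.inl_injective hrange
    have hcard : u.ncard = (Sum.inl ⁻¹' u).ncard + d := by
      have hu := u.ncard_add_ncard_compl
      have hV := (Sum.inl ⁻¹' u : Set V).ncard_add_ncard_compl
      rw [Nat.card_sum, Nat.card_fin] at hu
      rw [← Set.preimage_compl] at hV
      lia
    rw [← ncard_oddComponents_congr (inducePreimageIso _ hrange), hcard]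
    exact h (Sum.inl ⁻¹' u)
  -- A surviving vertex of `W` leaves at most one odd component, and none by parity if `u = ∅`.
  · obtain ⟨_, ⟨w, rfl⟩, hw⟩ := Set.not_subset.1 hu
    have hone := ncard_oddComponents_le_one_of_isUniversal
      (isUniversal_induce (s := uᶜ) hw (isUniversal_joinTop_inr (G := G) w))
    have hparity := (even_ncard_oddComponents_induce_compl_add_ncard (joinTop G (Fin d)) u).2
      (by simpa using hd)
    grind

theorem exists_isMatching_ncard_compl_verts_le [Finite V] {d : ℕ}
    (h : ∀ u : Set V, (G.induce uᶜ).oddComponents.ncard ≤ u.ncard + d) :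
    ∃ M : G.Subgraph, M.IsMatching ∧ M.vertsᶜ.ncard ≤ d := by
  by_cases hd : Even (Nat.card V + d)
  · exact exists_isMatching_ncard_compl_verts_le_of_even hd h
  -- For the other parity of `d` the hypothesis holds with `d - 1` in place of `d`.
  · have hparity := even_ncard_oddComponents_induce_compl_add_ncard G
    have hpos : d ≠ 0 := by
      have := h ∅
      have := hparity ∅
      grind [Set.ncard_empty]
    obtain ⟨M, hM, hMd⟩ := exists_isMatching_ncard_compl_verts_le_of_even (G := G) (d := d - 1)
      (by grind) fun u ↦ by grind
    exact ⟨M, hM, by lia⟩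

theorem exists_ncard_add_card_le_ncard_oddComponents_add [Finite V] {k : ℕ}
    (hk : ∀ M : G.Subgraph, M.IsMatching → M.edgeSet.ncard ≤ k) :
    ∃ u : Set V, u.ncard + Nat.card V ≤ (G.induce uᶜ).oddComponents.ncard + 2 * k := by
  by_contra! hlt
  have hcard : 2 * k < Nat.card V := by
    have := hlt ∅
    rw [Set.ncard_empty] at this
    lia
  obtain ⟨M, hM, hMd⟩ := exists_isMatching_ncard_compl_verts_le (G := G)
    (d := Nat.card V - (2 * k + 1)) fun u ↦ by have := hlt u; lia
  have := hk M hM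
  have := ncard_verts_eq_two_mul_ncard_edgeSet hM
  have := M.verts.ncard_add_ncard_compl
  lia

end Berge

section EdgeCount

variable {V : Type*} [Fintype V] {G H : SimpleGraph V} [DecidableRel G.Adj] [DecidableRel H.Adj]

lemma card_edgeFinset_add_card_edgeFinset_induce_le (h : G ≤ H) (s : Set V)
    [DecidablePred (· ∈ s)] :
    #G.edgeFinset + #(H.induce s).edgeFinset ≤ #(G.induce s).edgeFinset + #H.edgeFinset := by
  classical
  have hsdiff : G.edgeFinset \ s.toFinset.sym2 ⊆ H.edgeFinset \ s.toFinset.sym2 :=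
    sdiff_subset_sdiff (edgeFinset_mono h) subset_rfl
  have hG := card_inter_add_card_sdiff G.edgeFinset s.toFinset.sym2
  have hH := card_inter_add_card_sdiff H.edgeFinset s.toFinset.sym2
  rw [← map_edgeFinset_induce, card_map] at hG hH
  have := card_le_card hsdiff
  lia

lemma card_edgeFinset_add_choose_two_le (G : SimpleGraph V) [DecidableRel G.Adj] (s : Set V)
    [DecidablePred (· ∈ s)] :
    #G.edgeFinset + s.ncard.choose 2 ≤
      #(G.induce s).edgeFinset + (Fintype.card V).choose 2 := by
  classical
  have h := card_edgeFinset_add_card_edgeFinset_induce_le (le_top : G ≤ ⊤) s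
  have htop : #((⊤ : SimpleGraph V).induce s).edgeFinset = s.ncard.choose 2 := by
    rw [← Nat.card_coe_set_eq, Nat.card_eq_fintype_card, ← card_edgeFinset_top_eq_card_choose_two]
    congr!
    exact induce_top s
  rwa [htop, card_edgeFinset_top_eq_card_choose_two] at h

end EdgeCount

section Components

variable {V : Type*} (G : SimpleGraph V)

lemma degree_lt_ncard_supp [Finite V] (v : V) [Fintype (G.neighborSet v)] :
    G.degree v < (G.connectedComponentMk v).supp.ncard := by
  have hsub : insert v (G.neighborSet v) ⊆ (G.connectedComponentMk v).supp :=
    Set.insert_subset rfl fun w hw ↦ (ConnectedComponent.connectedComponentMk_eq_of_adj hw).symm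
  have := Set.ncard_le_ncard hsub
  rw [Set.ncard_insert_of_notMem (G.notMem_neighborSet_self)] at this
  rwa [← Nat.card_coe_set_eq, Nat.card_eq_fintype_card, card_neighborSet_eq_degree] at this

variable [Fintype V] [Fintype G.ConnectedComponent]

lemma sum_connectedComponentMk (f : G.ConnectedComponent → ℕ) :
    ∑ v, f (G.connectedComponentMk v) = ∑ C : G.ConnectedComponent, C.supp.ncard * f C := by
  classical
  rw [← sum_fiberwise' univ G.connectedComponentMk f]
  refine sum_congr rfl fun C _ ↦ ?_
  rw [sum_const, smul_eq_mul, ← Set.ncard_coe_finset]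
  congr 2
  ext v
  simp

lemma sum_ncard_supp_sub_one_add_card :
    ∑ C : G.ConnectedComponent, (C.supp.ncard - 1) + Fintype.card G.ConnectedComponent =
      Fintype.card V := by
  have hsum := sum_connectedComponentMk G fun _ ↦ 1
  simp only [sum_const, card_univ, smul_eq_mul, mul_one] at hsum
  rw [hsum, ← card_univ, card_eq_sum_ones, ← sum_add_distrib]
  exact sum_congr rfl fun C _ ↦ Nat.sub_add_cancel C.nonempty_supp.ncard_pos

theorem card_edgeFinset_le_choose_two_of_card_connectedComponent [DecidableRel G.Adj] :
    #G.edgeFinset ≤ (Fintype.card V - Fintype.card G.ConnectedComponent + 1).choose 2 := by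
  have hexcess := sum_ncard_supp_sub_one_add_card G
  set m := ∑ C : G.ConnectedComponent, (C.supp.ncard - 1) with hm
  have hsupp : ∀ C : G.ConnectedComponent, C.supp.ncard ≤ m + 1 := fun C ↦ by
    have := single_le_sum (f := fun C : G.ConnectedComponent ↦ C.supp.ncard - 1)
      (fun _ _ ↦ Nat.zero_le _) (mem_univ C)
    lia
  have htwice : 2 * #G.edgeFinset ≤ (m + 1) * m := calc
    2 * #G.edgeFinset = ∑ v, G.degree v := G.sum_degrees_eq_twice_card_edges.symm
    _ ≤ ∑ v, ((G.connectedComponentMk v).supp.ncard - 1) :=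
      sum_le_sum fun v _ ↦ Nat.le_sub_one_of_lt (degree_lt_ncard_supp G v)
    _ = ∑ C : G.ConnectedComponent, C.supp.ncard * (C.supp.ncard - 1) :=
      sum_connectedComponentMk G fun C ↦ C.supp.ncard - 1
    _ ≤ ∑ C : G.ConnectedComponent, (m + 1) * (C.supp.ncard - 1) :=
      sum_le_sum fun C _ ↦ Nat.mul_le_mul_right _ (hsupp C)
    _ = (m + 1) * m := by rw [hm, mul_sum]
  rw [← hexcess, Nat.add_sub_cancel, Nat.choose_two_right, Nat.add_sub_cancel,
    Nat.le_div_iff_mul_le two_pos, mul_comm]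
  exact htwice

end Components

section Arith

lemma choose_two_add (a b : ℕ) : (a + b).choose 2 = a.choose 2 + a * b + b.choose 2 := by
  qify
  simp only [Nat.cast_choose_two]
  push_cast
  ring

lemma choose_two_two_mul_add_one_le {t m : ℕ} (h : 3 * (t + 1) ≤ 2 * m) :
    (2 * t + 1).choose 2 ≤ t.choose 2 + t * m := by
  have hmul : (t : ℚ) * (3 * (t + 1)) ≤ t * (2 * m) := by exact_mod_cast Nat.mul_le_mul_left t h
  qify
  simp only [Nat.cast_choose_two]
  push_cast
  linarith

lemma choose_two_add_le_max {s k n : ℕ} (hsk : s ≤ k) (hkn : k ≤ n) :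
    s.choose 2 + s * (n - s) + (2 * (k - s) + 1).choose 2 ≤
      max (k.choose 2 + k * (n - k)) ((2 * k + 1).choose 2) := by
  obtain ⟨t, rfl⟩ := Nat.exists_eq_add_of_le hsk
  obtain ⟨m, rfl⟩ := Nat.exists_eq_add_of_le hkn
  rw [Nat.add_sub_cancel_left, Nat.add_sub_cancel_left, add_assoc s t m, Nat.add_sub_cancel_left]
  -- The value at `s = k` exceeds the left side by `t * (2 * m - 3 * (t + 1)) / 2`.
  rcases le_or_gt (3 * (t + 1)) (2 * m) with hm | hm
  · apply le_max_of_le_left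
    have := choose_two_two_mul_add_one_le hm
    rw [choose_two_add s t]
    linarith
  · apply le_max_of_le_right
    have hmul : (s : ℚ) * (s + 2 * m) ≤ s * (s + 3 * (t + 1)) := by
      exact_mod_cast Nat.mul_le_mul_left s (by lia)
    qify
    simp only [Nat.cast_choose_two]
    push_cast
    nlinarith

end Arith

section EdgeBound

variable {V : Type*} [Fintype V] {G : SimpleGraph V} [DecidableRel G.Adj] {k : ℕ}

theorem exists_card_edgeFinset_le
    (hk : ∀ M : G.Subgraph, M.IsMatching → M.edgeSet.ncard ≤ k) :
    ∃ s ≤ k, #G.edgeFinset ≤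
      s.choose 2 + s * (Fintype.card V - s) + (2 * (k - s) + 1).choose 2 := by
  classical
  obtain ⟨u, hu⟩ := exists_ncard_add_card_le_ncard_oddComponents_add hk
  have hodd : (G.induce uᶜ).oddComponents.ncard ≤
      Fintype.card (G.induce uᶜ).ConnectedComponent := by
    rw [← Nat.card_eq_fintype_card]
    exact Set.ncard_le_card _
  have hcomponents := sum_ncard_supp_sub_one_add_card (G.induce uᶜ)
  have hedges := card_edgeFinset_le_choose_two_of_card_connectedComponent (G.induce uᶜ)
  have hnonedges := card_edgeFinset_add_choose_two_le G uᶜ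
  have hcompl := u.ncard_add_ncard_compl
  rw [Nat.card_eq_fintype_card] at hu hcompl
  rw [← Nat.card_eq_fintype_card (α := (uᶜ : Set V)), Nat.card_coe_set_eq] at hcomponents hedges
  have hsk : u.ncard ≤ k := by lia
  refine ⟨u.ncard, hsk, ?_⟩
  have hinduce := hedges.trans
    (Nat.choose_le_choose 2 (by lia : _ ≤ 2 * (k - u.ncard) + 1))
  rw [← hcompl, choose_two_add] at hnonedges
  rw [← hcompl, Nat.add_sub_cancel_left]
  lia

theorem card_edgeFinset_le_max
    (hk : ∀ M : G.Subgraph, M.IsMatching → M.edgeSet.ncard ≤ k) :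
    #G.edgeFinset ≤ max (k.choose 2 + k * (Fintype.card V - k)) ((2 * k + 1).choose 2) := by
  rcases le_total k (Fintype.card V) with hkn | hnk
  · obtain ⟨s, hsk, hs⟩ := exists_card_edgeFinset_le hk
    exact hs.trans (choose_two_add_le_max hsk hkn)
  · exact G.card_edgeFinset_le_card_choose_two.trans <|
      (Nat.choose_le_choose 2 (by lia)).trans (le_max_right _ _)

end EdgeBound

end ErdosGallai

/-- Erdős–Gallai: if an n-vertex graph has no matching with k+1 edges, then
e(G) ≤ max(e(K_k + complement(K_{n−k})), e(K_{2k+1})); in particular, for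
n ≥ 3k+3, e(G) ≤ k(n−k) + C(k,2). -/
theorem stmt_19 {V : Type*} [Fintype V] [DecidableEq V] (G : SimpleGraph V)
    [DecidableRel G.Adj] (n k : ℕ) (hn : Fintype.card V = n)
    (hm : ¬ ∃ M : G.Subgraph, M.IsMatching ∧ M.edgeSet.ncard = k + 1) :
    G.edgeFinset.card ≤ max (Nat.choose k 2 + k * (n - k)) (Nat.choose (2 * k + 1) 2) ∧
    (3 * k + 3 ≤ n → G.edgeFinset.card ≤ k * (n - k) + Nat.choose k 2) := by
  have hk : ∀ M : G.Subgraph, M.IsMatching → M.edgeSet.ncard ≤ k := fun M hM ↦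
    not_lt.1 fun hlt ↦ hm (ErdosGallai.exists_isMatching_ncard_edgeSet_eq hM hlt)
  have hmax := ErdosGallai.card_edgeFinset_le_max hk
  rw [hn] at hmax
  refine ⟨hmax, fun hkn ↦ ?_⟩
  rw [add_comm]
  exact hmax.trans
    (max_le le_rfl (ErdosGallai.choose_two_two_mul_add_one_le (by lia)))
end
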